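/- Let M(1),…,M(n) be an n-outcome POVM on ℂ^d ⊗ ℂ^k, let ξ₁, ξ₂ be density matrices on ℂ^k, and let A₁, A₂ be n-outcome PVMs on ℂ^d programmed by ξ₁ and ξ₂ respectively, i.e., Tr[A_j(i)ρ] = Tr[M(i)(ρ ⊗ ξ_j)] for every density matrix ρ on ℂ^d, every outcome i, and j = 1,2. If A₁ ≠ A₂, then F(ξ₁,ξ₂) = 0; equivalently, the programming states ξ₁ and ξ₂ are orthogonal (their supports intersect trivially). -/

import Mathlib

open scoped BigOperators Kronecker ComplexOrder Matrix

noncomputable section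

/-- The positive semidefinite square root of a positive semidefinite matrix
(the former Mathlib definition, since removed). -/
noncomputable def Matrix.PosSemidef.sqrt {n : Type*} [Fintype n] [DecidableEq n]
    {A : Matrix n n ℂ} (hA : A.PosSemidef) : Matrix n n ℂ :=
  hA.1.eigenvectorUnitary.1 * Matrix.diagonal ((↑) ∘ Real.sqrt ∘ hA.1.eigenvalues) *
  (star hA.1.eigenvectorUnitary : Matrix n n ℂ)


namespace QProg

/-- The positive-semidefinite square root of a matrix, extended by `0` to all matrices. -/
noncomputable def matSqrt {α : Type*} [Fintype α] [DecidableEq α]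
    (A : Matrix α α ℂ) : Matrix α α ℂ :=
  @dite _ A.PosSemidef (Classical.propDecidable _) (fun h => h.sqrt) (fun _ => 0)

/-- The fidelity `F(ρ,σ) = Tr √(√ρ σ √ρ)` of two (density) matrices. -/
noncomputable def fid {α : Type*} [Fintype α] [DecidableEq α]
    (ρ σ : Matrix α α ℂ) : ℝ :=
  ((matSqrt (matSqrt ρ * σ * matSqrt ρ)).trace).re

/-- A density matrix: positive semidefinite with unit trace. -/
def IsDensity {α : Type*} [Fintype α] [DecidableEq α] (ρ : Matrix α α ℂ) : Prop :=
  ρ.PosSemidef ∧ ρ.trace = 1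

/-- An `n`-outcome POVM: positive semidefinite effects summing to the identity. -/
def IsPOVM {α : Type*} [Fintype α] [DecidableEq α] {n : ℕ}
    (E : Fin n → Matrix α α ℂ) : Prop :=
  (∀ i, (E i).PosSemidef) ∧ ∑ i, E i = 1

/-- The outcome distribution `p^E_ρ(i) = Tr[E(i) ρ]`. -/
noncomputable def outDist {α : Type*} [Fintype α] [DecidableEq α] {n : ℕ}
    (E : Fin n → Matrix α α ℂ) (ρ : Matrix α α ℂ) (i : Fin n) : ℝ :=
  ((E i * ρ).trace).re

/-- The Bhattacharyya coefficient `B(p,q) = ∑ᵢ √(p i) √(q i)`. -/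
noncomputable def bhat {n : ℕ} (p q : Fin n → ℝ) : ℝ :=
  ∑ i, Real.sqrt (p i) * Real.sqrt (q i)

/-- `B(E₁,E₂)`: infimum of `B(p^{E₁}_{ρ₁}, p^{E₂}_{ρ₂}) / F(ρ₁,ρ₂)` over pairs of
density matrices with nonvanishing fidelity. -/
noncomputable def obsB {α : Type*} [Fintype α] [DecidableEq α] {n : ℕ}
    (E₁ E₂ : Fin n → Matrix α α ℂ) : ℝ :=
  sInf { r : ℝ | ∃ ρ₁ ρ₂ : Matrix α α ℂ, IsDensity ρ₁ ∧ IsDensity ρ₂ ∧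
    fid ρ₁ ρ₂ ≠ 0 ∧ r = bhat (outDist E₁ ρ₁) (outDist E₂ ρ₂) / fid ρ₁ ρ₂ }

/-- A post-processing from `n` outcomes to `m` outcomes. -/
def IsPostProc {n m : ℕ} (lam : Fin n → Fin m → ℝ) : Prop :=
  (∀ i y, 0 ≤ lam i y) ∧ ∀ i, ∑ y, lam i y = 1

/-- The action `(λ⋆E)(y) = ∑ᵢ λ(i|y) E(i)` of a post-processing on a POVM. -/
noncomputable def ppStar {α : Type*} [Fintype α] [DecidableEq α] {n m : ℕ}
    (lam : Fin n → Fin m → ℝ) (E : Fin n → Matrix α α ℂ) (y : Fin m) :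
    Matrix α α ℂ :=
  ∑ i, (lam i y : ℂ) • E i

/-- The action `(λ⋆p)(y) = ∑ᵢ λ(i|y) p(i)` of a post-processing on a probability vector. -/
noncomputable def ppStarVec {n m : ℕ} (lam : Fin n → Fin m → ℝ) (p : Fin n → ℝ)
    (y : Fin m) : ℝ :=
  ∑ i, lam i y * p i

/-- A probability vector on `{1,…,n}`. -/
def IsProbVec {n : ℕ} (p : Fin n → ℝ) : Prop :=
  (∀ i, 0 ≤ p i) ∧ ∑ i, p i = 1

/-- `F(λ₁,λ₂)`: infimum of `B(λ₁⋆p, λ₂⋆p)` over probability vectors `p`. -/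
noncomputable def ppF {n m : ℕ} (lam₁ lam₂ : Fin n → Fin m → ℝ) : ℝ :=
  sInf { r : ℝ | ∃ p : Fin n → ℝ, IsProbVec p ∧
    r = bhat (ppStarVec lam₁ p) (ppStarVec lam₂ p) }

/-- A PVM (sharp observable): a POVM all of whose effects are projections. -/
def IsPVM {α : Type*} [Fintype α] [DecidableEq α] {n : ℕ}
    (E : Fin n → Matrix α α ℂ) : Prop :=
  IsPOVM E ∧ ∀ i, E i * E i = E i

lemma exists_gram {α : Type*} [Fintype α] [DecidableEq α] {X : Matrix α α ℂ}
    (hX : X.PosSemidef) : ∃ B : Matrix α α ℂ, X = Bᴴ * B := by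
  open scoped MatrixOrder in
  exact (CStarAlgebra.nonneg_iff_eq_star_mul_self).1 hX.nonneg

lemma mul_eq_zero_of_trace {α : Type*} [Fintype α] [DecidableEq α] {X Y : Matrix α α ℂ}
    (hX : X.PosSemidef) (hY : Y.PosSemidef) (h : (X * Y).trace = 0) : X * Y = 0 := by
  obtain ⟨B, rfl⟩ := exists_gram hX
  obtain ⟨C, rfl⟩ := exists_gram hY
  have h1 : ((B * Cᴴ) * (B * Cᴴ)ᴴ).trace = 0 := by
    rw [← h, Matrix.conjTranspose_mul, Matrix.conjTranspose_conjTranspose,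
      Matrix.mul_assoc Bᴴ, Matrix.trace_mul_comm Bᴴ]
    simp only [Matrix.mul_assoc]
  have h2 : B * Cᴴ = 0 := Matrix.trace_mul_conjTranspose_self_eq_zero_iff.1 h1
  calc Bᴴ * B * (Cᴴ * C) = Bᴴ * (B * Cᴴ) * C := by simp only [Matrix.mul_assoc]
    _ = 0 := by rw [h2]; simp

lemma sqrt_herm {α : Type*} [Fintype α] [DecidableEq α] {X : Matrix α α ℂ}
    (hX : X.PosSemidef) : (hX.sqrt)ᴴ = hX.sqrt := by
  have hd : (Matrix.diagonal ((↑) ∘ Real.sqrt ∘ hX.1.eigenvalues) : Matrix α α ℂ)ᴴ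
      = Matrix.diagonal ((↑) ∘ Real.sqrt ∘ hX.1.eigenvalues) := by
    rw [Matrix.diagonal_conjTranspose]
    congr 1
    ext i
    simp
  unfold Matrix.PosSemidef.sqrt
  rw [Matrix.conjTranspose_mul, Matrix.conjTranspose_mul, hd, ← Matrix.star_eq_conjTranspose,
    ← Matrix.star_eq_conjTranspose, star_star, Matrix.mul_assoc]

lemma sqrt_mul_self {α : Type*} [Fintype α] [DecidableEq α] {X : Matrix α α ℂ}
    (hX : X.PosSemidef) : hX.sqrt * hX.sqrt = X := by
  have hs := hX.1.spectral_theorem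
  rw [Unitary.conjStarAlgAut_apply] at hs
  have hu : (star hX.1.eigenvectorUnitary : Matrix α α ℂ) * hX.1.eigenvectorUnitary.1 = 1 :=
    Unitary.coe_star_mul_self _
  conv_rhs => rw [hs]
  unfold Matrix.PosSemidef.sqrt
  have hd : (Matrix.diagonal ((↑) ∘ Real.sqrt ∘ hX.1.eigenvalues) : Matrix α α ℂ) *
      Matrix.diagonal ((↑) ∘ Real.sqrt ∘ hX.1.eigenvalues) =
      Matrix.diagonal (RCLike.ofReal ∘ hX.1.eigenvalues) := by
    rw [Matrix.diagonal_mul_diagonal]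
    congr 1
    ext i
    simp only [Function.comp]
    rw [← Complex.ofReal_mul, Real.mul_self_sqrt (hX.eigenvalues_nonneg i)]
    rfl
  rw [← hd]
  generalize (Matrix.diagonal ((↑) ∘ Real.sqrt ∘ hX.1.eigenvalues) : Matrix α α ℂ) = D
  calc _ = hX.1.eigenvectorUnitary.1 * D * ((star hX.1.eigenvectorUnitary : Matrix α α ℂ) *
      hX.1.eigenvectorUnitary.1) * D * (star hX.1.eigenvectorUnitary : Matrix α α ℂ) := by
        simp only [Matrix.mul_assoc]
    _ = _ := by rw [hu]; simp only [Matrix.mul_assoc, Matrix.one_mul]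

lemma matSqrt_zero {α : Type*} [Fintype α] [DecidableEq α] :
    matSqrt (0 : Matrix α α ℂ) = 0 := by
  have h0 : (0 : Matrix α α ℂ).PosSemidef := Matrix.PosSemidef.zero
  have h := sqrt_mul_self h0
  have h2 := sqrt_herm h0
  unfold matSqrt
  rw [dif_pos h0]
  apply Matrix.conjTranspose_mul_self_eq_zero.1
  rw [h2, h]

lemma fid_eq_zero {α : Type*} [Fintype α] [DecidableEq α] {X Y : Matrix α α ℂ}
    (hX : X.PosSemidef) (hY : Y.PosSemidef) (h : X * Y = 0) : fid X Y = 0 := by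
  have hS : matSqrt X = hX.sqrt := by
    unfold matSqrt
    rw [dif_pos hX]
  have hz : matSqrt X * Y * matSqrt X = 0 := by
    rw [hS]
    obtain ⟨C, rfl⟩ := exists_gram hY
    have h1 := sqrt_mul_self hX
    have h2 := sqrt_herm hX
    generalize hX.sqrt = S at h1 h2
    have h3 : S * (Cᴴ * C) * S = (C * S)ᴴ * (C * S) := by
      rw [Matrix.conjTranspose_mul, h2]; simp only [Matrix.mul_assoc]
    have h4 : ((C * S)ᴴ * (C * S)).trace = 0 := by
      rw [← h3, Matrix.trace_mul_comm, ← Matrix.mul_assoc, h1, h, Matrix.trace_zero]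
    rw [h3, Matrix.trace_conjTranspose_mul_self_eq_zero_iff.1 h4]
    simp
  unfold fid
  rw [hz, matSqrt_zero]
  simp

lemma prog_psd {d k : ℕ} {N : Matrix (Fin d × Fin k) (Fin d × Fin k) ℂ}
    {ξ : Matrix (Fin k) (Fin k) ℂ} {P : Matrix (Fin d) (Fin d) ℂ}
    (h : ∀ ρ : Matrix (Fin d) (Fin d) ℂ, IsDensity ρ →
      (P * ρ).trace = (N * (ρ ⊗ₖ ξ)).trace)
    (ρ : Matrix (Fin d) (Fin d) ℂ) (hρ : ρ.PosSemidef) :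
    (P * ρ).trace = (N * (ρ ⊗ₖ ξ)).trace := by
  by_cases ht : ρ.trace = 0
  · rw [hρ.trace_eq_zero_iff.1 ht]
    simp
  · have hn : (0 : ℂ) ≤ ρ.trace⁻¹ := inv_nonneg.2 hρ.trace_nonneg
    have := h (ρ.trace⁻¹ • ρ) ⟨hρ.smul hn, by
      rw [Matrix.trace_smul, smul_eq_mul, inv_mul_cancel₀ ht]⟩
    rw [Matrix.smul_kronecker, Matrix.mul_smul, Matrix.mul_smul, Matrix.trace_smul,
      Matrix.trace_smul, smul_eq_mul, smul_eq_mul] at this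
    exact mul_left_cancel₀ (inv_ne_zero ht) this

lemma prog_eq {d k : ℕ} {N : Matrix (Fin d × Fin k) (Fin d × Fin k) ℂ}
    (hN : N.PosSemidef) (hN1 : (1 - N).PosSemidef)
    {ξ : Matrix (Fin k) (Fin k) ℂ} (hξ : IsDensity ξ) {P : Matrix (Fin d) (Fin d) ℂ}
    (hP : P.PosSemidef) (hPP : P * P = P)
    (h : ∀ ρ : Matrix (Fin d) (Fin d) ℂ, IsDensity ρ →
      (P * ρ).trace = (N * (ρ ⊗ₖ ξ)).trace) :
    N * ((1 : Matrix (Fin d) (Fin d) ℂ) ⊗ₖ ξ) = P ⊗ₖ ξ := by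
  have hQ : (1 - P).PosSemidef := by
    have : (1 - P) = (1 - P)ᴴ * (1 - P) := by
      rw [Matrix.conjTranspose_sub, Matrix.conjTranspose_one, hP.1.eq]
      simp [Matrix.mul_sub, Matrix.sub_mul, hPP]
    rw [this]
    exact Matrix.posSemidef_conjTranspose_mul_self _
  have h1 : N * ((1 - P) ⊗ₖ ξ) = 0 := by
    apply mul_eq_zero_of_trace hN (hQ.kronecker hξ.1)
    rw [← prog_psd h _ hQ, Matrix.mul_sub, hPP]
    simp
  have h2 : (1 - N) * (P ⊗ₖ ξ) = 0 := by
    apply mul_eq_zero_of_trace hN1 (hP.kronecker hξ.1)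
    rw [Matrix.sub_mul, Matrix.trace_sub, ← prog_psd h _ hP, hPP, Matrix.one_mul,
      Matrix.trace_kronecker, hξ.2]
    simp
  have h3 : (1 : Matrix (Fin d) (Fin d) ℂ) ⊗ₖ ξ = (1 - P) ⊗ₖ ξ + P ⊗ₖ ξ := by
    rw [← Matrix.add_kronecker, sub_add_cancel]
  rw [h3, Matrix.mul_add, h1, zero_add]
  rw [Matrix.sub_mul, Matrix.one_mul, sub_eq_zero] at h2
  exact h2.symm

/-- Example 1: programming two different sharp observables requires
orthogonal programming states: `F(ξ₁,ξ₂) = 0`. -/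
theorem sharp_programming_orthogonal {d k n : ℕ}
    (M : Fin n → Matrix (Fin d × Fin k) (Fin d × Fin k) ℂ) (hM : IsPOVM M)
    (ξ₁ ξ₂ : Matrix (Fin k) (Fin k) ℂ) (hξ₁ : IsDensity ξ₁) (hξ₂ : IsDensity ξ₂)
    (A₁ A₂ : Fin n → Matrix (Fin d) (Fin d) ℂ) (hA₁ : IsPVM A₁) (hA₂ : IsPVM A₂)
    (hprog₁ : ∀ ρ : Matrix (Fin d) (Fin d) ℂ, IsDensity ρ →
      ∀ i, (A₁ i * ρ).trace = (M i * (ρ ⊗ₖ ξ₁)).trace)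
    (hprog₂ : ∀ ρ : Matrix (Fin d) (Fin d) ℂ, IsDensity ρ →
      ∀ i, (A₂ i * ρ).trace = (M i * (ρ ⊗ₖ ξ₂)).trace)
    (hne : A₁ ≠ A₂) :
    fid ξ₁ ξ₂ = 0 := by
  apply fid_eq_zero hξ₁.1 hξ₂.1
  obtain ⟨i, hi⟩ := Function.ne_iff.1 hne
  have hN1 : (1 - M i).PosSemidef := by
    rw [← hM.2, ← Finset.add_sum_erase _ _ (Finset.mem_univ i), add_sub_cancel_left]
    exact Matrix.posSemidef_sum _ fun j _ => hM.1 j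
  have e1 := prog_eq (hM.1 i) hN1 hξ₁ (hA₁.1.1 i) (hA₁.2 i) fun ρ hρ => hprog₁ ρ hρ i
  have e2 := prog_eq (hM.1 i) hN1 hξ₂ (hA₂.1.1 i) (hA₂.2 i) fun ρ hρ => hprog₂ ρ hρ i
  have e3 := congrArg Matrix.conjTranspose e1
  rw [Matrix.conjTranspose_mul, Matrix.conjTranspose_kronecker, Matrix.conjTranspose_kronecker,
    (hM.1 i).1.eq, hξ₁.1.1.eq, (hA₁.1.1 i).1.eq, Matrix.conjTranspose_one] at e3
  have e4 : (A₁ i) ⊗ₖ (ξ₁ * ξ₂) = (A₂ i) ⊗ₖ (ξ₁ * ξ₂) := by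
    calc (A₁ i) ⊗ₖ (ξ₁ * ξ₂)
        = ((A₁ i) ⊗ₖ ξ₁) * ((1 : Matrix (Fin d) (Fin d) ℂ) ⊗ₖ ξ₂) := by
          rw [← Matrix.mul_kronecker_mul, Matrix.mul_one]
      _ = ((1 : Matrix (Fin d) (Fin d) ℂ) ⊗ₖ ξ₁) * ((A₂ i) ⊗ₖ ξ₂) := by
          rw [← e3, Matrix.mul_assoc, e2]
      _ = _ := by rw [← Matrix.mul_kronecker_mul, Matrix.one_mul]
  by_contra hne0
  apply hi
  obtain ⟨a, b, hab⟩ : ∃ a b, (ξ₁ * ξ₂) a b ≠ 0 := by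
    by_contra hc
    push Not at hc
    exact hne0 (Matrix.ext hc)
  ext x y
  have := congrFun (congrFun e4 (x, a)) (y, b)
  simp only [Matrix.kroneckerMap_apply] at this
  exact mul_right_cancel₀ hab this
end QProg
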